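/- (Integral form of passivity, Proposition 3.9.) Let β ∈ (0,1), let w : [0,∞) → ℝ be continuous, and let V : [0,∞) → ℝ be continuously differentiable with V(t) ≥ 0 for all t ≥ 0. If the Caputo fractional derivative satisfies (D^β V)(t) ≤ w(t) for all t ≥ 0, then for every τ > 0: ∫₀^τ w(t) dt ≥ −(τ^(1−β)/((1−β)Γ(1−β)))·V(0). In particular, if V(0) = 0 then ∫₀^τ w(t) dt ≥ 0 for all τ ≥ 0. -/

import Mathlib

open MeasureTheory intervalIntegral

/-- Caputo fractional derivative of order `β` of a real-valued function `g`. -/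
noncomputable def caputo (β : ℝ) (g : ℝ → ℝ) (t : ℝ) : ℝ :=
  (1 / Real.Gamma (1 - β)) * ∫ s in (0:ℝ)..t, (t - s) ^ (-β) * deriv g s

/-!
Write `D^β V` as the convolution of `V'` with the kernel `k r = r ^ (-β) / Γ(1 - β)`. Integrating
over `[0, τ]` and exchanging the integrals on the triangle `0 < r ≤ t ≤ τ` turns `V'` into an
increment of `V`:
`∫₀^τ D^β V = ∫₀^τ k r * (V (τ - r) - V 0) dr ≥ -V 0 * ∫₀^τ k`,
because `k` and `V` are nonnegative.
-/

open Set Function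

section Triangle

/-- The triangle `a < r ≤ t ≤ b` of pairs `(t, r)`, over which a Volterra integral
`∫ t in a..b, ∫ r in a..t, f t r` is taken. The outer variable comes first. -/
def volterraTriangle (a b : ℝ) : Set (ℝ × ℝ) :=
  {p | a < p.2 ∧ p.2 ≤ p.1 ∧ p.1 ≤ b}

theorem measurableSet_volterraTriangle (a b : ℝ) : MeasurableSet (volterraTriangle a b) :=
  (measurableSet_lt measurable_const measurable_snd).inter <|
    (measurableSet_le measurable_snd measurable_fst).inter <|
      measurableSet_le measurable_fst measurable_const

variable {E : Type*} [NormedAddCommGroup E] [NormedSpace ℝ E] {a b : ℝ} {f : ℝ → ℝ → E}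

theorem integral_indicator_volterraTriangle_snd (t : ℝ) :
    ∫ r, (volterraTriangle a b).indicator (uncurry f) (t, r) =
      (Ioc a b).indicator (fun t ↦ ∫ r in a..t, f t r) t := by
  by_cases ht : t ∈ Ioc a b
  · have slice : (fun r ↦ (volterraTriangle a b).indicator (uncurry f) (t, r)) =
        (Ioc a t).indicator (f t) := by
      ext r
      simp [indicator_apply, volterraTriangle, ht.2]
    rw [slice, MeasureTheory.integral_indicator measurableSet_Ioc, indicator_of_mem ht,
      intervalIntegral.integral_of_le ht.1.le]
  · have slice (r : ℝ) : (volterraTriangle a b).indicator (uncurry f) (t, r) = 0 :=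
      indicator_of_notMem (fun h ↦ ht ⟨h.1.trans_le h.2.1, h.2.2⟩) _
    simp only [slice, MeasureTheory.integral_zero, indicator_of_notMem ht]

theorem integral_indicator_volterraTriangle_fst (r : ℝ) :
    ∫ t, (volterraTriangle a b).indicator (uncurry f) (t, r) =
      (Ioc a b).indicator (fun r ↦ ∫ t in r..b, f t r) r := by
  by_cases hr : r ∈ Ioc a b
  · have slice : (fun t ↦ (volterraTriangle a b).indicator (uncurry f) (t, r)) =
        (Icc r b).indicator (f · r) := by
      ext t
      simp [indicator_apply, volterraTriangle, hr.1]
    rw [slice, MeasureTheory.integral_indicator measurableSet_Icc, indicator_of_mem hr,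
      integral_Icc_eq_integral_Ioc, intervalIntegral.integral_of_le hr.2]
  · have slice (t : ℝ) : (volterraTriangle a b).indicator (uncurry f) (t, r) = 0 :=
      indicator_of_notMem (fun h ↦ hr ⟨h.1, h.2.1.trans h.2.2⟩) _
    simp only [slice, MeasureTheory.integral_zero, indicator_of_notMem hr]

theorem intervalIntegrable_integral_of_integrableOn_volterraTriangle (hab : a ≤ b)
    (hf : IntegrableOn (uncurry f) (volterraTriangle a b)) :
    IntervalIntegrable (fun t ↦ ∫ r in a..t, f t r) volume a b := by
  rw [intervalIntegrable_iff_integrableOn_Ioc_of_le hab,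
    ← integrable_indicator_iff measurableSet_Ioc]
  refine (hf.integrable_indicator (measurableSet_volterraTriangle a b)).integral_prod_left.congr ?_
  exact .of_forall integral_indicator_volterraTriangle_snd

theorem integral_integral_swap_volterraTriangle (hab : a ≤ b)
    (hf : IntegrableOn (uncurry f) (volterraTriangle a b)) :
    ∫ t in a..b, ∫ r in a..t, f t r = ∫ r in a..b, ∫ t in r..b, f t r := by
  have swap := integral_integral_swap
    (f := fun t r ↦ (volterraTriangle a b).indicator (uncurry f) (t, r))
    (hf.integrable_indicator (measurableSet_volterraTriangle a b))
  simp only [integral_indicator_volterraTriangle_snd, integral_indicator_volterraTriangle_fst,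
    MeasureTheory.integral_indicator measurableSet_Ioc] at swap
  rwa [intervalIntegral.integral_of_le hab, intervalIntegral.integral_of_le hab]

end Triangle

section Convolution

variable {E F G : Type*} [NormedAddCommGroup E] [NormedSpace ℝ E] [NormedAddCommGroup F]
  [NormedSpace ℝ F] [NormedAddCommGroup G] [NormedSpace ℝ G] {b : ℝ} {f : ℝ → E} {g : ℝ → F}

theorem integrableOn_volterraTriangle_convolution (L : E →L[ℝ] F →L[ℝ] G) (hb : 0 ≤ b)
    (hf : IntervalIntegrable f volume 0 b) (hg : IntervalIntegrable g volume 0 b) :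
    IntegrableOn (uncurry fun t r ↦ L (f r) (g (t - r))) (volterraTriangle 0 b) := by
  rw [intervalIntegrable_iff_integrableOn_Icc_of_le hb] at hf hg
  have truncated := (hf.integrable_indicator measurableSet_Icc).convolution_integrand L
    (hg.integrable_indicator measurableSet_Icc)
  refine truncated.integrableOn.congr_fun ?_ (measurableSet_volterraTriangle 0 b)
  rintro ⟨t, r⟩ ⟨hr : 0 < r, hrt : r ≤ t, htb : t ≤ b⟩
  have hr_mem : r ∈ Icc 0 b := ⟨hr.le, hrt.trans htb⟩
  have ht_sub_mem : t - r ∈ Icc 0 b := ⟨sub_nonneg.2 hrt, by linarith⟩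
  simp only [uncurry_apply_pair, indicator_of_mem hr_mem, indicator_of_mem ht_sub_mem]

theorem intervalIntegrable_convolution (L : E →L[ℝ] F →L[ℝ] G) (hb : 0 ≤ b)
    (hf : IntervalIntegrable f volume 0 b) (hg : IntervalIntegrable g volume 0 b) :
    IntervalIntegrable (fun t ↦ ∫ r in (0 : ℝ)..t, L (f r) (g (t - r))) volume 0 b :=
  intervalIntegrable_integral_of_integrableOn_volterraTriangle hb
    (integrableOn_volterraTriangle_convolution L hb hf hg)

theorem integral_convolution_eq_integral_primitive [CompleteSpace F] [CompleteSpace G]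
    (L : E →L[ℝ] F →L[ℝ] G) (hb : 0 ≤ b)
    (hf : IntervalIntegrable f volume 0 b) (hg : IntervalIntegrable g volume 0 b) :
    ∫ t in (0 : ℝ)..b, ∫ r in (0 : ℝ)..t, L (f r) (g (t - r)) =
      ∫ r in (0 : ℝ)..b, L (f r) (∫ s in (0 : ℝ)..b - r, g s) := by
  rw [integral_integral_swap_volterraTriangle hb
    (integrableOn_volterraTriangle_convolution L hb hf hg)]
  refine integral_congr fun r hr ↦ ?_
  rw [uIcc_of_le hb] at hr
  have hg_sub : IntervalIntegrable g volume 0 (b - r) := by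
    refine hg.mono_set ?_
    rw [uIcc_of_le hb, uIcc_of_le (sub_nonneg.2 hr.2)]
    exact Icc_subset_Icc_right (sub_le_self b hr.1)
  calc ∫ t in r..b, L (f r) (g (t - r))
      = ∫ s in (0 : ℝ)..b - r, L (f r) (g s) := by
        rw [integral_comp_sub_right (fun s ↦ L (f r) (g s)) r, sub_self]
    _ = L (f r) (∫ s in (0 : ℝ)..b - r, g s) :=
        (L (f r)).intervalIntegral_comp_comm hg_sub

end Convolution

section Caputo

variable {β τ : ℝ} {V : ℝ → ℝ}

theorem caputo_eq_convolution (β : ℝ) (V : ℝ → ℝ) (t : ℝ) :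
    caputo β V t =
      (1 / Real.Gamma (1 - β)) * ∫ r in (0 : ℝ)..t, r ^ (-β) * deriv V (t - r) := by
  have reflect := integral_comp_sub_left (a := 0) (b := t)
    (fun s ↦ (t - s) ^ (-β) * deriv V s) t
  simp only [sub_sub_cancel, sub_self, sub_zero] at reflect
  rw [caputo, reflect]

theorem intervalIntegrable_caputo (hβ : β < 1) (hτ : 0 ≤ τ)
    (hV : AbsolutelyContinuousOnInterval V 0 τ) :
    IntervalIntegrable (caputo β V) volume 0 τ := by
  rw [funext (caputo_eq_convolution β V)]
  exact (intervalIntegrable_convolution (.mul ℝ ℝ) hτ (intervalIntegrable_rpow' (by linarith))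
    hV.intervalIntegrable_deriv).const_mul _

theorem integral_caputo (hβ : β < 1) (hτ : 0 ≤ τ)
    (hV : AbsolutelyContinuousOnInterval V 0 τ) :
    ∫ t in (0 : ℝ)..τ, caputo β V t =
      (1 / Real.Gamma (1 - β)) * ∫ r in (0 : ℝ)..τ, r ^ (-β) * (V (τ - r) - V 0) := by
  have swap := integral_convolution_eq_integral_primitive (.mul ℝ ℝ) hτ
    (intervalIntegrable_rpow' (by linarith : -1 < -β)) hV.intervalIntegrable_deriv
  simp only [ContinuousLinearMap.mul_apply'] at swap
  simp only [caputo_eq_convolution, intervalIntegral.integral_const_mul, swap]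
  congr 1
  refine integral_congr fun r hr ↦ ?_
  rw [uIcc_of_le hτ] at hr
  have hV_sub : AbsolutelyContinuousOnInterval V 0 (τ - r) := by
    refine hV.mono ?_
    rw [uIcc_of_le hτ, uIcc_of_le (sub_nonneg.2 hr.2)]
    exact Icc_subset_Icc_right (sub_le_self τ hr.1)
  rw [hV_sub.integral_deriv_eq_sub]

theorem integral_rpow_neg (hβ : β < 1) (τ : ℝ) :
    ∫ r in (0 : ℝ)..τ, r ^ (-β) = τ ^ (1 - β) / (1 - β) := by
  rw [integral_rpow (Or.inl (by linarith)), neg_add_eq_sub, Real.zero_rpow (by linarith), sub_zero]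

theorem neg_mul_le_integral_caputo (hβ : β < 1) (hτ : 0 ≤ τ)
    (hV : AbsolutelyContinuousOnInterval V 0 τ) (hVpos : ∀ t ∈ Icc 0 τ, 0 ≤ V t) :
    -(τ ^ (1 - β) / ((1 - β) * Real.Gamma (1 - β))) * V 0 ≤ ∫ t in (0 : ℝ)..τ, caputo β V t := by
  have hΓ : 0 < Real.Gamma (1 - β) := Real.Gamma_pos_of_pos (sub_pos.2 hβ)
  have hk : IntervalIntegrable (fun r : ℝ ↦ r ^ (-β)) volume 0 τ :=
    intervalIntegrable_rpow' (by linarith)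
  have hV_reflect : ContinuousOn (fun r ↦ V (τ - r) - V 0) (uIcc 0 τ) := by
    refine (hV.continuousOn.comp (by fun_prop) fun r hr ↦ ?_).sub continuousOn_const
    rw [uIcc_of_le hτ] at hr ⊢
    exact ⟨sub_nonneg.2 hr.2, sub_le_self τ hr.1⟩
  calc -(τ ^ (1 - β) / ((1 - β) * Real.Gamma (1 - β))) * V 0
      = (1 / Real.Gamma (1 - β)) * ∫ r in (0 : ℝ)..τ, r ^ (-β) * -V 0 := by
        rw [intervalIntegral.integral_mul_const, integral_rpow_neg hβ, div_mul_eq_div_div]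
        ring
    _ ≤ (1 / Real.Gamma (1 - β)) * ∫ r in (0 : ℝ)..τ, r ^ (-β) * (V (τ - r) - V 0) := by
        refine mul_le_mul_of_nonneg_left ?_ (one_div_pos.2 hΓ).le
        refine integral_mono_on hτ (hk.mul_const _) (hk.mul_continuousOn hV_reflect) fun r hr ↦ ?_
        have hV_nonneg := hVpos (τ - r) ⟨sub_nonneg.2 hr.2, sub_le_self τ hr.1⟩
        exact mul_le_mul_of_nonneg_left (by linarith) (Real.rpow_nonneg hr.1 _)
    _ = ∫ t in (0 : ℝ)..τ, caputo β V t := (integral_caputo hβ hτ hV).symm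

end Caputo

theorem stmt_6_general {β τ : ℝ} (hβ : β < 1) (hτ : 0 ≤ τ) {w V : ℝ → ℝ}
    (hw : IntervalIntegrable w volume 0 τ) (hV : AbsolutelyContinuousOnInterval V 0 τ)
    (hVpos : ∀ t ∈ Icc 0 τ, 0 ≤ V t)
    (hp : ∀ᵐ t ∂volume.restrict (Icc 0 τ), caputo β V t ≤ w t) :
    -(τ ^ (1 - β) / ((1 - β) * Real.Gamma (1 - β))) * V 0 ≤ ∫ t in (0 : ℝ)..τ, w t :=
  (neg_mul_le_integral_caputo hβ hτ hV hVpos).trans <|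
    integral_mono_ae_restrict hτ (intervalIntegrable_caputo hβ hτ hV) hw hp

/-- Integral form of passivity (Proposition 3.9): if `D^β V ≤ w` on `[0,∞)` and `V ≥ 0`,
then `∫₀^τ w ≥ −(τ^(1−β)/((1−β)Γ(1−β)))·V 0`; moreover if `V 0 = 0` then `∫₀^τ w ≥ 0`. -/
theorem stmt_6 (β : ℝ) (hβ : β ∈ Set.Ioo (0:ℝ) 1)
    (w : ℝ → ℝ) (hw : Continuous w)
    (V : ℝ → ℝ) (hV : ContDiff ℝ 1 V) (hVpos : ∀ t ≥ (0:ℝ), 0 ≤ V t)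
    (hp : ∀ t ≥ (0:ℝ), caputo β V t ≤ w t) :
    (∀ τ > (0:ℝ),
      -(τ ^ (1 - β) / ((1 - β) * Real.Gamma (1 - β))) * V 0 ≤ ∫ t in (0:ℝ)..τ, w t) ∧
    (V 0 = 0 → ∀ τ ≥ (0:ℝ), 0 ≤ ∫ t in (0:ℝ)..τ, w t) := by
  have bound (τ : ℝ) (hτ : 0 ≤ τ) := stmt_6_general hβ.2 hτ (hw.intervalIntegrable 0 τ)
    hV.contDiffOn.absolutelyContinuousOnInterval (fun t ht ↦ hVpos t ht.1)
    (ae_restrict_of_forall_mem measurableSet_Icc fun t ht ↦ hp t ht.1)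
  exact ⟨fun τ hτ ↦ bound τ hτ.le, fun hV0 τ hτ ↦ by simpa [hV0] using bound τ hτ⟩
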